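/- Let α > 0 and let a, b, c be real numbers. Let A : ℝ → ℝ be a smooth 1-periodic function with ∫₀¹ A(x) dx = 4α·(ac − b²). Then there exists a smooth 1-periodic function φ : ℝ → ℝ with 1 + φ''(x) > 0 for all x, such that for all x ∈ ℝ: −(1/4)·(d²/dx²)(1/(1+φ''(x))) − 2α·(a² + c²) − 4α·b²·(1 + φ''(x)) + 2α·(a + c)² = A(x). -/

import Mathlib

theorem aux_first (s : ℝ) (hs : s ≠ 0) (f : ℝ → ℝ) (hf : Continuous f)
    (hp : Function.Periodic f 1) :
    ∃ v : ℝ → ℝ, Function.Periodic v 1 ∧ ∀ x, HasDerivAt v (f x - s * v x) x := by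
  have hcont : Continuous (fun y => Real.exp (s * y) * f y) := by fun_prop
  set I : ℝ → ℝ := fun x => ∫ y in (0:ℝ)..x, Real.exp (s * y) * f y with hI
  have hes : Real.exp s - 1 ≠ 0 := by
    intro h
    exact hs (Real.exp_eq_one_iff s |>.1 (by linarith))
  have hId : ∀ x, HasDerivAt I (Real.exp (s * x) * f x) x := fun x =>
    intervalIntegral.integral_hasDerivAt_right (hcont.intervalIntegrable _ _)
      hcont.stronglyMeasurable.stronglyMeasurableAtFilter hcont.continuousAt
  have hshift : ∀ x, I (x + 1) = I 1 + Real.exp s * I x := by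
    intro x
    have h1 : I (x + 1) = I 1 + ∫ y in (1:ℝ)..(x+1), Real.exp (s * y) * f y :=
      (intervalIntegral.integral_add_adjacent_intervals (hcont.intervalIntegrable _ _)
        (hcont.intervalIntegrable _ _)).symm
    have h2 : ∫ y in (1:ℝ)..(x+1), Real.exp (s * y) * f y
        = ∫ y in (0:ℝ)..x, Real.exp (s * (y+1)) * f (y+1) := by
      rw [intervalIntegral.integral_comp_add_right (fun y => Real.exp (s * y) * f y) 1]
      simp
    rw [h1, h2, hI, ← intervalIntegral.integral_const_mul]
    congr 1
    apply intervalIntegral.integral_congr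
    intro y _
    simp only
    rw [hp y, mul_add, Real.exp_add, mul_one]; ring
  refine ⟨fun x => Real.exp (-(s * x)) * (I 1 / (Real.exp s - 1) + I x), ?_, ?_⟩
  · intro x
    simp only
    rw [hshift, show -(s * (x+1)) = -(s*x) + -s by ring, Real.exp_add, Real.exp_neg s]
    have := Real.exp_ne_zero s
    field_simp
    ring
  · intro x
    have h1 : HasDerivAt (fun x : ℝ => Real.exp (-(s * x))) (Real.exp (-(s*x)) * (-(s*1))) x :=
      (((hasDerivAt_id x).const_mul s).neg).exp
    have h2 := h1.mul ((hId x).const_add (I 1 / (Real.exp s - 1)))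
    refine h2.congr_deriv ?_
    have h3 : Real.exp (-(s*x)) * (Real.exp (s*x) * f x) = f x := by
      rw [← mul_assoc, ← Real.exp_add]; simp
    rw [h3]; ring

theorem aux_second (s : ℝ) (hs : s ≠ 0) (f : ℝ → ℝ) (hf : Continuous f)
    (hp : Function.Periodic f 1) :
    ∃ w w1 : ℝ → ℝ, Function.Periodic w 1 ∧ Function.Periodic w1 1 ∧
      (∀ x, HasDerivAt w (w1 x) x) ∧ ∀ x, HasDerivAt w1 (s ^ 2 * w x - f x) x := by
  obtain ⟨v, hv, hvd⟩ := aux_first (-s) (by simpa using hs) (fun x => - f x) hf.neg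
    (fun x => by simp only [hp x])
  have hvc : Continuous v := continuous_iff_continuousAt.2 fun x => (hvd x).continuousAt
  obtain ⟨w, hw, hwd⟩ := aux_first s hs v hvc hv
  refine ⟨w, fun x => v x - s * w x, hw, fun x => by simp only [hv x, hw x], hwd, fun x => ?_⟩
  refine ((hvd x).sub ((hwd x).const_mul s)).congr_deriv ?_
  ring

theorem aux_pos1 (s : ℝ) (hs : 0 < s) (v v1 : ℝ → ℝ) (hp : Function.Periodic v 1)
    (hd : ∀ x, HasDerivAt v (v1 x) x) (h : ∀ x, 0 ≤ v1 x + s * v x) (x : ℝ) : 0 ≤ v x := by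
  have hder : ∀ x, HasDerivAt (fun x => Real.exp (s * x) * v x)
      (Real.exp (s*x) * (v1 x + s * v x)) x := by
    intro x
    refine ((((hasDerivAt_id x).const_mul s).exp).mul (hd x)).congr_deriv ?_
    simp only [id]; ring
  have hm : Monotone (fun x => Real.exp (s * x) * v x) :=
    monotone_of_hasDerivAt_nonneg hder fun x => mul_nonneg (Real.exp_pos _).le (h x)
  have h1 := hm (show x ≤ x + 1 by linarith)
  simp only [hp x] at h1
  have h2 : Real.exp (s * x) < Real.exp (s * (x+1)) := Real.exp_lt_exp.2 (by nlinarith)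
  by_contra hneg
  push Not at hneg
  nlinarith

theorem aux_pos2 (s : ℝ) (hs : 0 < s) (u u1 u2 : ℝ → ℝ) (hp : Function.Periodic u 1)
    (hp1 : Function.Periodic u1 1)
    (hd : ∀ x, HasDerivAt u (u1 x) x) (hd1 : ∀ x, HasDerivAt u1 (u2 x) x)
    (h : ∀ x, u2 x ≤ s ^ 2 * u x) (x : ℝ) : 0 ≤ u x := by
  refine aux_pos1 s hs u u1 hp hd (fun x => ?_) x
  -- reflect
  have hr : ∀ y, HasDerivAt (fun y => u1 (-y) + s * u (-y)) (-(u2 (-y)) + s * (-(u1 (-y)))) y := by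
    intro y
    have e1 : HasDerivAt (fun y => u1 (-y)) (-(u2 (-y))) y := by
      have := (hd1 (-y)).comp y (hasDerivAt_neg y)
      simpa [Function.comp_def] using this
    have e2 : HasDerivAt (fun y => u (-y)) (-(u1 (-y))) y := by
      have := (hd (-y)).comp y (hasDerivAt_neg y)
      simpa [Function.comp_def] using this
    exact e1.add (e2.const_mul s)
  have := aux_pos1 s hs _ _ ?_ hr ?_ (-x)
  · simpa using this
  · intro y
    have q1 : u1 (-(y+1)) = u1 (-y) := by rw [← hp1 (-(y+1))]; congr 1; ring
    have q2 : u (-(y+1)) = u (-y) := by rw [← hp (-(y+1))]; congr 1; ring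
    simp only [q1, q2]
  · intro y
    have := h (-y)
    nlinarith

theorem aux_bdd (f : ℝ → ℝ) (hf : Continuous f) (hp : Function.Periodic f 1) :
    ∃ B : ℝ, 0 < B ∧ ∀ x, |f x| ≤ B := by
  obtain ⟨B, hB⟩ := (isCompact_Icc (a := (0:ℝ)) (b := 1)).exists_bound_of_continuousOn
    hf.continuousOn
  refine ⟨max B 1, by positivity, fun x => ?_⟩
  obtain ⟨y, hy, hxy⟩ := hp.exists_mem_Ico₀ (by norm_num) x
  rw [hxy]
  exact (hB y ⟨hy.1, hy.2.le⟩).trans (le_max_left _ _)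

theorem aux_prim0 (f : ℝ → ℝ) (hf : ContDiff ℝ (⊤ : ℕ∞) f) (hp : Function.Periodic f 1)
    (hint : ∫ x in (0:ℝ)..1, f x = 0) :
    ∃ F : ℝ → ℝ, ContDiff ℝ (⊤ : ℕ∞) F ∧ Function.Periodic F 1 ∧
      (∀ x, HasDerivAt F (f x) x) ∧ ∫ x in (0:ℝ)..1, F x = 0 := by
  have hcont := hf.continuous
  set I : ℝ → ℝ := fun x => ∫ y in (0:ℝ)..x, f y with hI
  have hId : ∀ x, HasDerivAt I (f x) x := fun x =>
    intervalIntegral.integral_hasDerivAt_right (hcont.intervalIntegrable _ _)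
      hcont.stronglyMeasurable.stronglyMeasurableAtFilter hcont.continuousAt
  have hIc : Continuous I := continuous_iff_continuousAt.2 fun x => (hId x).continuousAt
  have hd : ∀ c x, HasDerivAt (fun x => I x - c) (f x) x := fun c x => (hId x).sub_const c
  refine ⟨fun x => I x - ∫ y in (0:ℝ)..1, I y, ?_, ?_, hd _, ?_⟩
  · rw [contDiff_infty_iff_deriv]
    refine ⟨fun x => (hd _ x).differentiableAt, ?_⟩
    rw [show deriv (fun x => I x - ∫ y in (0:ℝ)..1, I y) = f from funext fun x => (hd _ x).deriv]
    exact hf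
  · intro x
    have h1 : I (x + 1) = I x + ∫ y in x..(x+1), f y :=
      (intervalIntegral.integral_add_adjacent_intervals (hcont.intervalIntegrable _ _)
        (hcont.intervalIntegrable _ _)).symm
    have h2 := hp.intervalIntegral_add_eq x 0
    rw [zero_add, hint] at h2
    simp only [h1, h2, add_zero]
  · rw [intervalIntegral.integral_sub (hIc.intervalIntegrable _ _) (by simp)]
    simp

theorem aux_prim2 (f : ℝ → ℝ) (hf : ContDiff ℝ (⊤ : ℕ∞) f) (hp : Function.Periodic f 1)
    (hint : ∫ x in (0:ℝ)..1, f x = 0) :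
    ∃ G F : ℝ → ℝ, ContDiff ℝ (⊤ : ℕ∞) G ∧ Function.Periodic G 1 ∧ Function.Periodic F 1 ∧
      ContDiff ℝ (⊤ : ℕ∞) F ∧
      (∀ x, HasDerivAt G (F x) x) ∧ (∀ x, HasDerivAt F (f x) x) := by
  obtain ⟨F, h1, h2, h3, h4⟩ := aux_prim0 f hf hp hint
  obtain ⟨G, k1, k2, k3, k4⟩ := aux_prim0 F h1 h2 h4
  exact ⟨G, F, k1, k2, h2, h1, k3, h3⟩

/-- case `k = 0`. -/
theorem aux_zero (g : ℝ → ℝ) (hg : ContDiff ℝ (⊤ : ℕ∞) g) (hp : Function.Periodic g 1)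
    (hint : ∫ x in (0:ℝ)..1, g x = 0) :
    ∃ u u1 : ℝ → ℝ, ContDiff ℝ (⊤ : ℕ∞) u ∧ Function.Periodic u 1 ∧ (∀ x, 0 < u x) ∧
      (∀ x, HasDerivAt u (u1 x) x) ∧ (∀ x, HasDerivAt u1 (g x) x) ∧
      ∫ x in (0:ℝ)..1, 1 / u x = 1 := by
  obtain ⟨G, F, hG, hGp, hFp, hF, hGd, hFd⟩ := aux_prim2 g hg hp hint
  obtain ⟨L, hL, hFL⟩ := aux_bdd F hF.continuous hFp
  obtain ⟨x0, -, hx0⟩ := (isCompact_Icc (a := (0:ℝ)) (b := 1)).exists_isMinOn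
    (Set.nonempty_Icc.2 zero_le_one) hG.continuous.continuousOn
  have hmin : ∀ x, G x0 ≤ G x := by
    intro x
    obtain ⟨y, hy, hxy⟩ := hGp.exists_mem_Ico₀ (by norm_num) x
    rw [hxy]
    exact hx0 ⟨hy.1, hy.2.le⟩
  have hlip : ∀ x, x0 ≤ x → G x - G x0 ≤ L * (x - x0) := by
    intro x hx
    have := Convex.norm_image_sub_le_of_norm_hasDerivWithin_le (s := Set.univ)
      (f := G) (f' := F) (C := L) (fun y _ => (hGd y).hasDerivWithinAt)
      (fun y _ => hFL y) convex_univ (Set.mem_univ x0) (Set.mem_univ x)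
    rw [Real.norm_eq_abs, Real.norm_eq_abs, abs_of_nonneg (sub_nonneg.2 hx)] at this
    exact (le_abs_self _).trans this
  set η0 : ℝ := L * Real.exp (-L) with hη0
  have hη0p : 0 < η0 := by positivity
  set J : ℝ → ℝ := fun η => ∫ x in (0:ℝ)..1, 1 / (G x - G x0 + max η η0) with hJ
  have hpos : ∀ η x, 0 < G x - G x0 + max η η0 := by
    intro η x
    have := hmin x
    have := le_max_right η η0
    linarith
  have hGc := hG.continuous
  have hJc : Continuous J := by
    apply intervalIntegral.continuous_parametric_intervalIntegral_of_continuous'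
    simp only [Function.uncurry_def]
    exact continuous_const.div (by fun_prop) (fun p => (hpos _ _).ne')
  have hcx : ∀ η, Continuous (fun x => 1 / (G x - G x0 + max η η0)) := fun η =>
    continuous_const.div (by fun_prop) (fun p => (hpos _ _).ne')
  have hJ0 : 1 ≤ J η0 := by
    have hper : Function.Periodic (fun x => 1 / (G x - G x0 + max η0 η0)) 1 := fun x => by
      simp only [hGp x]
    have h2 := hper.intervalIntegral_add_eq x0 0
    rw [zero_add] at h2
    rw [hJ]
    simp only
    rw [← h2]
    have hlog : ∀ x ∈ Set.uIcc x0 (x0+1), HasDerivAt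
        (fun x => Real.log (L * (x - x0) + η0) / L) (1 / (L * (x - x0) + η0)) x := by
      intro x hx
      rw [Set.uIcc_of_le (by linarith)] at hx
      have hq : 0 < L * (x - x0) + η0 := by
        have := mul_nonneg hL.le (sub_nonneg.2 hx.1); linarith
      have h1 : HasDerivAt (fun x => L * (x - x0) + η0) (L * 1) x :=
        (((hasDerivAt_id x).sub_const x0).const_mul L).add_const η0
      refine ((h1.log hq.ne').div_const L).congr_deriv ?_
      field_simp
    have hci : IntervalIntegrable (fun x => 1 / (L * (x - x0) + η0)) MeasureTheory.volume
        x0 (x0+1) := by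
      apply ContinuousOn.intervalIntegrable
      intro x hx
      rw [Set.uIcc_of_le (by linarith)] at hx
      have hq : 0 < L * (x - x0) + η0 := by
        have := mul_nonneg hL.le (sub_nonneg.2 hx.1); linarith
      apply ContinuousAt.continuousWithinAt
      exact continuousAt_const.div (by fun_prop) hq.ne'
    have hftc := intervalIntegral.integral_eq_sub_of_hasDerivAt hlog hci
    have hle : ∫ x in x0..(x0+1), 1 / (L * (x - x0) + η0)
        ≤ ∫ x in x0..(x0+1), 1 / (G x - G x0 + max η0 η0) := by
      apply intervalIntegral.integral_mono_on (by linarith) hci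
        ((hcx η0).intervalIntegrable _ _)
      intro x hx
      apply one_div_le_one_div_of_le (hpos _ _)
      rw [max_self]
      have := hlip x hx.1
      linarith
    refine le_trans ?_ hle
    rw [hftc]
    have e1 : Real.log (L * (x0 + 1 - x0) + η0) / L - Real.log (L * (x0 - x0) + η0) / L
        = Real.log ((L + η0) / η0) / L := by
      rw [Real.log_div (by positivity) hη0p.ne']
      rw [show L * (x0 + 1 - x0) + η0 = L + η0 by ring, show L * (x0 - x0) + η0 = η0 by ring]
      ring
    rw [e1, le_div_iff₀ hL, one_mul, Real.le_log_iff_exp_le (by positivity), le_div_iff₀ hη0p,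
      hη0]
    have : Real.exp L * (L * Real.exp (-L)) = L := by
      rw [mul_left_comm, ← Real.exp_add]; simp
    rw [this]
    linarith
  have hJ1 : J (max 1 η0) ≤ 1 := by
    have : J (max 1 η0) ≤ ∫ x in (0:ℝ)..1, (1:ℝ) := by
      apply intervalIntegral.integral_mono_on zero_le_one ((hcx _).intervalIntegrable _ _) (by simp)
      intro x _
      rw [div_le_one (hpos _ _)]
      have := hmin x
      have := le_max_left (max 1 η0) η0
      have := le_max_left 1 η0
      linarith
    simpa using this
  obtain ⟨η, -, hη⟩ := intermediate_value_Icc' (le_max_right 1 η0) hJc.continuousOn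
    (show (1:ℝ) ∈ Set.Icc _ _ from ⟨hJ1, hJ0⟩)
  refine ⟨fun x => G x - G x0 + max η η0, F, ?_, fun x => by simp only [hGp x], hpos η, ?_, hFd, hη⟩
  · exact (hG.sub contDiff_const).add contDiff_const
  · intro x
    exact ((hGd x).sub_const _).add_const _

/-- case `k > 0`. -/
theorem aux_posk (k : ℝ) (hk : 0 < k) (g : ℝ → ℝ) (hg : ContDiff ℝ (⊤ : ℕ∞) g)
    (hp : Function.Periodic g 1) (hint : ∫ x in (0:ℝ)..1, g x = k) :
    ∃ u u1 : ℝ → ℝ, Continuous u ∧ Function.Periodic u 1 ∧ Function.Periodic u1 1 ∧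
      (∀ x, 0 < u x) ∧
      (∀ x, HasDerivAt u (u1 x) x) ∧ (∀ x, HasDerivAt u1 (g x - k / u x) x) := by
  obtain ⟨w, w1, hw, hwp, hw1p, hw1, hwd, hw1d⟩ := aux_prim2 (fun x => g x - k)
    (hg.sub contDiff_const) (fun x => by simp only [hp x])
    (by rw [intervalIntegral.integral_sub (hg.continuous.intervalIntegrable _ _) (by simp), hint]
        simp)
  obtain ⟨W, hW, hwW⟩ := aux_bdd w hw.continuous hwp
  obtain ⟨B, hB, hgB⟩ := aux_bdd g hg.continuous hp
  set ε : ℝ := k / (k + B) with hε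
  have hε0 : 0 < ε := by positivity
  have hε1 : ε ≤ 1 := by rw [hε, div_le_one (by positivity)]; linarith
  have hgε : ∀ x, g x ≤ k / ε := by
    intro x
    have : k / ε = k + B := by rw [hε]; field_simp
    have h2 := (le_abs_self _).trans (hgB x)
    linarith
  set M : ℝ := 1 + 2 * W with hM
  have hM0 : 0 < M := by positivity
  have hβ1 : ∀ x, 1 ≤ 1 + W + w x := fun x => by have := (abs_le.1 (hwW x)).1; linarith
  have hβM : ∀ x, 1 + W + w x ≤ M := fun x => by have := (abs_le.1 (hwW x)).2; linarith
  set s : ℝ := Real.sqrt k / ε with hs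
  have hs0 : 0 < s := by positivity
  have hs2 : s ^ 2 = k / ε ^ 2 := by rw [hs, div_pow, Real.sq_sqrt hk.le]
  set lam : ℝ := s ^ 2 with hlam
  have hlam0 : 0 < lam := by positivity
  set δ : ℝ := k / M ^ 2 with hδ
  have hδ0 : 0 < δ := by positivity
  have hεM : ε ≤ M := by linarith
  have hδl : δ ≤ lam := by
    rw [hs2, hδ]
    gcongr
  -- monotonicity of the nonlinearity
  have key : ∀ p q, ε ≤ p → p ≤ q → q ≤ M →
      0 ≤ (lam * q + k / q) - (lam * p + k / p) ∧
      (lam * q + k / q) - (lam * p + k / p) ≤ (lam - δ) * (q - p) := by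
    intro p q h1 h2 h3
    have hp0 : 0 < p := by linarith
    have hq0 : 0 < q := by linarith
    have e : (lam * q + k / q) - (lam * p + k / p) = (lam - k / (p * q)) * (q - p) := by
      field_simp
      ring
    have b1 : k / (p * q) ≤ lam := by
      rw [hs2]
      apply div_le_div_of_nonneg_left hk.le (by positivity)
      nlinarith
    have b2 : δ ≤ k / (p * q) := by
      rw [hδ]
      apply div_le_div_of_nonneg_left hk.le (by positivity)
      nlinarith
    rw [e]
    constructor
    · exact mul_nonneg (by linarith) (by linarith)
    · exact mul_le_mul_of_nonneg_right (by linarith) (by linarith)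
  let S : Set (BoundedContinuousFunction ℝ ℝ) :=
    {u | ∀ x, u (x + 1) = u x ∧ ε ≤ u x ∧ u x ≤ 1 + W + w x}
  have hSc : IsClosed S := by
    have : S = ⋂ x, {u | u (x + 1) = u x ∧ ε ≤ u x ∧ u x ≤ 1 + W + w x} := by
      ext u; simp [S]
    rw [this]
    refine isClosed_iInter fun x => ?_
    have hev : ∀ y : ℝ, Continuous (fun u : BoundedContinuousFunction ℝ ℝ => u y) :=
      fun y => continuous_eval_const y
    exact (isClosed_eq (hev _) (hev _)).inter
      ((isClosed_le continuous_const (hev _)).inter (isClosed_le (hev _) continuous_const))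
  have hex : ∀ u : S, ∃ v : S, ∃ v1 : ℝ → ℝ, Function.Periodic v1 1 ∧
      (∀ x, HasDerivAt v.1 (v1 x) x) ∧
      (∀ x, HasDerivAt v1 (lam * v.1 x - (lam * u.1 x + k / u.1 x - g x)) x) := by
    rintro ⟨u, hu⟩
    have hu0 : ∀ x, 0 < u x := fun x => lt_of_lt_of_le hε0 (hu x).2.1
    obtain ⟨v, v1, hv, hv1, hvd, hv1d⟩ := aux_second s hs0.ne'
      (fun x => lam * u x + k / u x - g x)
      (((continuous_const.mul u.continuous).add
        (continuous_const.div u.continuous (fun x => (hu0 x).ne'))).sub hg.continuous)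
      (fun x => by simp only [(hu x).1, hp x])
    have hvc : Continuous v := continuous_iff_continuousAt.2 fun x => (hvd x).continuousAt
    have lo : ∀ x, ε ≤ v x := by
      intro x
      have := aux_pos2 s hs0 (fun x => v x - ε) v1 _ (fun x => by simp only [hv x]) hv1
        (fun x => (hvd x).sub_const ε) hv1d (fun x => by
          have h1 := (key ε (u x) le_rfl (hu x).2.1 ((hu x).2.2.trans (hβM x))).1
          have h2 := hgε x
          rw [← hlam]
          linarith) x
      linarith
    have hi : ∀ x, v x ≤ 1 + W + w x := by
      intro x
      have := aux_pos2 s hs0 (fun x => (1 + W + w x) - v x) (fun x => w1 x - v1 x) _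
        (fun x => by simp only [hv x, hwp x]) (fun x => by simp only [hv1 x, hw1p x])
        (fun x => ((hwd x).const_add (1 + W)).sub (hvd x))
        (fun x => (hw1d x).sub (hv1d x)) (fun x => by
          have h1 := (key (u x) (1 + W + w x) (hu x).2.1 (hu x).2.2 (hβM x)).1
          have h2 : k / (1 + W + w x) ≤ k := div_le_self hk.le (hβ1 x)
          rw [← hlam]
          linarith) x
      linarith
    refine ⟨⟨BoundedContinuousFunction.ofNormedAddCommGroup v hvc M (fun x => ?_), fun x =>
      ⟨hv x, lo x, hi x⟩⟩, v1, hv1, hvd, hv1d⟩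
    rw [Real.norm_eq_abs, abs_of_nonneg (hε0.le.trans (lo x))]
    exact (hi x).trans (hβM x)
  choose T T1 hT1 hTd hT1d using hex
  have hK0 : 0 ≤ (lam - δ) / lam := div_nonneg (by linarith) hlam0.le
  have hcontr : ContractingWith ⟨(lam - δ) / lam, hK0⟩ T := by
    refine ⟨?_, LipschitzWith.of_dist_le_mul fun u v => ?_⟩
    · change (lam - δ) / lam < 1
      rw [div_lt_one hlam0]; linarith
    have hN : ∀ x, |(lam * u.1 x + k / u.1 x) - (lam * v.1 x + k / v.1 x)|
        ≤ (lam - δ) * dist u v := by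
      intro x
      have hd : |u.1 x - v.1 x| ≤ dist u v := by
        rw [← Real.dist_eq]; exact BoundedContinuousFunction.dist_coe_le_dist x
      have hld : 0 ≤ lam - δ := by linarith
      rcases le_total (u.1 x) (v.1 x) with h | h
      · have := key _ _ (u.2 x).2.1 h ((v.2 x).2.2.trans (hβM x))
        have h3 : v.1 x - u.1 x ≤ dist u v := by
          rw [abs_sub_comm] at hd; exact (le_abs_self _).trans hd
        rw [abs_sub_comm, abs_of_nonneg this.1]
        exact this.2.trans (mul_le_mul_of_nonneg_left h3 hld)
      · have := key _ _ (v.2 x).2.1 h ((u.2 x).2.2.trans (hβM x))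
        rw [abs_of_nonneg this.1]
        exact this.2.trans (mul_le_mul_of_nonneg_left ((le_abs_self _).trans hd) hld)
    have hgen : ∀ u v : S, (∀ x, |(lam * u.1 x + k / u.1 x) - (lam * v.1 x + k / v.1 x)|
        ≤ (lam - δ) * dist u v) → ∀ x, (T u).1 x - (T v).1 x ≤ (lam - δ) / lam * dist u v := by
      intro u v hN x
      have := aux_pos2 s hs0 (fun x => (lam - δ) / lam * dist u v + ((T v).1 x - (T u).1 x))
        (fun x => T1 v x - T1 u x) _
        (fun x => by simp only [((T u).2 x).1, ((T v).2 x).1])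
        (fun x => by simp only [hT1 u x, hT1 v x])
        (fun x => ((hTd v x).sub (hTd u x)).const_add _)
        (fun x => (hT1d v x).sub (hT1d u x)) (fun x => by
          have h1 := (abs_le.1 (hN x)).2
          have h2 : lam * ((lam - δ) / lam * dist u v) = (lam - δ) * dist u v := by
            field_simp
          have h3 := (abs_le.1 (hN x)).1
          rw [← hlam, mul_add, h2]
          linarith) x
      linarith
    change dist (T u).1 (T v).1 ≤ (lam - δ) / lam * dist u v
    rw [BoundedContinuousFunction.dist_le (mul_nonneg hK0 dist_nonneg)]
    intro x
    rw [Real.dist_eq, abs_le]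
    have h1 := hgen u v hN x
    have h2 := hgen v u (fun x => by rw [abs_sub_comm, dist_comm v u]; exact hN x) x
    rw [dist_comm v u] at h2
    constructor <;> linarith
  have : CompleteSpace S := hSc.completeSpace_coe
  have : Nonempty S := by
    refine ⟨⟨BoundedContinuousFunction.const ℝ ε, fun x => ⟨rfl, le_rfl, ?_⟩⟩⟩
    exact hε1.trans (hβ1 x)
  obtain ⟨u, hu⟩ : ∃ u : S, T u = u :=
    ⟨_, hcontr.fixedPoint_isFixedPt⟩
  refine ⟨u.1, T1 u, u.1.continuous, fun x => (u.2 x).1, hT1 u,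
    fun x => lt_of_lt_of_le hε0 (u.2 x).2.1, fun x => ?_, fun x => ?_⟩
  · have := hTd u x
    rwa [hu] at this
  · have := hT1d u x
    rw [hu] at this
    refine this.congr_deriv ?_
    ring

theorem aux_smooth (k : ℝ) (g u u1 : ℝ → ℝ) (hg : ContDiff ℝ (⊤ : ℕ∞) g)
    (hu : Continuous u) (hpos : ∀ x, 0 < u x)
    (hd : ∀ x, HasDerivAt u (u1 x) x) (hd1 : ∀ x, HasDerivAt u1 (g x - k / u x) x) :
    ContDiff ℝ (⊤ : ℕ∞) u := by
  rw [contDiff_infty]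
  intro n
  induction n with
  | zero => exact contDiff_zero.2 hu
  | succ n ih =>
    have e : deriv u = u1 := funext fun x => (hd x).deriv
    have e1 : deriv u1 = fun x => g x - k / u x := funext fun x => (hd1 x).deriv
    have h2 : ContDiff ℝ n (fun x => g x - k / u x) :=
      ((contDiff_infty.1 hg) n).sub (contDiff_const.div ih (fun x => (hpos x).ne'))
    have h3 : ContDiff ℝ ((n : WithTop ℕ∞) + 1) u1 := by
      rw [contDiff_succ_iff_deriv]
      refine ⟨fun x => (hd1 x).differentiableAt, by simp, by rw [e1]; exact h2⟩
    push_cast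
    rw [contDiff_succ_iff_deriv]
    refine ⟨fun x => (hd x).differentiableAt, by simp, ?_⟩
    rw [e]
    exact h3.of_le (by simp)

theorem aux_all (k : ℝ) (hk : 0 ≤ k) (g : ℝ → ℝ) (hg : ContDiff ℝ (⊤ : ℕ∞) g)
    (hp : Function.Periodic g 1) (hint : ∫ x in (0:ℝ)..1, g x = k) :
    ∃ u u1 : ℝ → ℝ, ContDiff ℝ (⊤ : ℕ∞) u ∧ Function.Periodic u 1 ∧ (∀ x, 0 < u x) ∧
      (∀ x, HasDerivAt u (u1 x) x) ∧ (∀ x, HasDerivAt u1 (g x - k / u x) x) ∧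
      ∫ x in (0:ℝ)..1, 1 / u x = 1 := by
  rcases hk.eq_or_lt with rfl | hk
  · simpa using aux_zero g hg hp hint
  · obtain ⟨u, u1, hu, hup, hu1p, hpos, hd, hd1⟩ := aux_posk k hk g hg hp hint
    refine ⟨u, u1, aux_smooth k g u u1 hg hu hpos hd hd1, hup, hpos, hd, hd1, ?_⟩
    have hc : Continuous (fun x => 1 / u x) := continuous_const.div hu (fun x => (hpos x).ne')
    have hc2 : Continuous (fun x => k * (1 / u x)) := continuous_const.mul hc
    have h0 := intervalIntegral.integral_eq_sub_of_hasDerivAt (a := 0) (b := 1)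
      (f := u1) (f' := fun x => g x - k * (1 / u x))
      (fun x _ => by have := hd1 x; rwa [div_eq_mul_one_div] at this)
      ((hg.continuous.sub hc2).intervalIntegrable _ _)
    rw [intervalIntegral.integral_sub (hg.continuous.intervalIntegrable _ _)
      (hc2.intervalIntegrable _ _), intervalIntegral.integral_const_mul, hint] at h0
    have h1 : u1 1 = u1 0 := by have := hu1p 0; rwa [zero_add] at this
    rw [h1, sub_self] at h0
    have h2 : k * (∫ x in (0:ℝ)..1, 1 / u x) = k * 1 := by linarith
    exact mul_left_cancel₀ hk.ne' h2

/-- Solvability of the reduced Kähler–Yang–Mills (large radius limit)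
    ODE on the abelian surface with one-variable data. -/
theorem stmt_15 (α a b c : ℝ) (hα : 0 < α)
    (A : ℝ → ℝ) (hA : ContDiff ℝ (⊤ : ℕ∞) A) (hAper : Function.Periodic A 1)
    (hint : ∫ x in (0 : ℝ)..1, A x = 4 * α * (a * c - b ^ 2)) :
    ∃ φ : ℝ → ℝ, ContDiff ℝ (⊤ : ℕ∞) φ ∧ Function.Periodic φ 1 ∧
      (∀ x, 0 < 1 + deriv (deriv φ) x) ∧
      ∀ x, -(1 / 4) * deriv (deriv (fun y => 1 / (1 + deriv (deriv φ) y))) x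
            - 2 * α * (a ^ 2 + c ^ 2)
            - 4 * α * b ^ 2 * (1 + deriv (deriv φ) x)
            + 2 * α * (a + c) ^ 2 = A x := by
  obtain ⟨u, u1, hu, hup, hpos, hd, hd1, hone⟩ := aux_all (16 * α * b ^ 2) (by positivity)
    (fun x => 4 * (4 * α * a * c - A x))
    (contDiff_const.mul (contDiff_const.sub hA)) (fun x => by simp only [hAper x])
    (by
      rw [intervalIntegral.integral_const_mul, intervalIntegral.integral_sub (by simp)
        (hA.continuous.intervalIntegrable _ _), hint]
      simp
      ring)
  have hus : ContDiff ℝ (⊤ : ℕ∞) (fun x => 1 / u x) :=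
    contDiff_const.div hu (fun x => (hpos x).ne')
  obtain ⟨φ, F, hφ, hφp, -, -, hφd, hFd⟩ := aux_prim2 (fun x => 1 / u x - 1)
    (hus.sub contDiff_const) (fun x => by simp only [hup x])
    (by rw [intervalIntegral.integral_sub (hus.continuous.intervalIntegrable _ _) (by simp), hone]
        simp)
  have e1 : deriv φ = F := funext fun x => (hφd x).deriv
  have e2 : deriv F = fun x => 1 / u x - 1 := funext fun x => (hFd x).deriv
  have e3 : (fun y => 1 / (1 + deriv (deriv φ) y)) = u := by
    funext y
    rw [e1, e2]
    simp
  have e4 : deriv u = u1 := funext fun x => (hd x).deriv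
  refine ⟨φ, hφ, hφp, fun x => ?_, fun x => ?_⟩
  · rw [e1, e2]
    have := hpos x
    simp only [add_sub_cancel]
    positivity
  · rw [e3, e4, (hd1 x).deriv, e1, e2]
    have := (hpos x).ne'
    field_simp
    ring
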